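/- Let T be a full binary tree, let v > 0, σ > 0, and assign to every leaf of T the value v. Define the node value u recursively by u(leaf) = v and u(node) = (u(left child) + u(right child))/2. Then: (i) u(n) = v for every node n of T; (ii) letting m̄ = (−(1+v²) + √(1 + 2v² + 4σv³ + 9v⁴)) / (2v(2v+σ)) and assigning to every internal node the state m_i = (m̄, m̄) and value pair v_i = (u(left child), u(right child)) = (v, v), the Seeley vector field vanishes at every internal node: f((m̄, m̄), (v, v)) = 0. Hence the constant state m = m̄·𝟙 is an equilibrium of the stacked tree dynamics in which each internal node's state evolves by the Seeley vector field applied to its own (state, value) pair. -/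

import Mathlib

/-- The Seeley et al. vector field on `ℝ² × ℝ²` with parameter `σ`. -/
noncomputable def seeley (σ : ℝ) (m v : ℝ × ℝ) : ℝ × ℝ :=
  (v.1 * (1 - m.1 - m.2) - m.1 * (1 / v.1 - v.1 * (1 - m.1 - m.2) + σ * m.2),
   v.2 * (1 - m.1 - m.2) - m.2 * (1 / v.2 - v.2 * (1 - m.1 - m.2) + σ * m.1))

/-- A full binary tree (shape only): either a leaf or a node with two subtrees. -/
inductive BT where
  | leaf : BT
  | node : BT → BT → BT

/-- The node value for leaf value `v`: `u(leaf) = v`, and the value of an internal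
node is the average of its children's values. -/
noncomputable def uval (v : ℝ) : BT → ℝ
  | .leaf => v
  | .node l r => (uval v l + uval v r) / 2

/-!
With equal values `v` at both children and equal states `x`, both components of the Seeley vector
field are `-1 / v` times the quadratic `v (2v + σ) x² + (1 + v²) x - v²`, and `mbar` is one of its
roots. Averaging preserves constants, so every internal node sees the value pair `(v, v)`.
-/

theorem uval_eq_leaf_value (v : ℝ) (t : BT) : uval v t = v := by
  induction t with
  | leaf => rfl
  | node l r hl hr => rw [uval, hl, hr, add_self_div_two]

section Diagonal

variable {v : ℝ} (σ x : ℝ)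

theorem seeley_diag (hv : v ≠ 0) :
    seeley σ (x, x) (v, v) =
      (-(v * (2 * v + σ) * (x * x) + (1 + v ^ 2) * x + -v ^ 2) / v,
        -(v * (2 * v + σ) * (x * x) + (1 + v ^ 2) * x + -v ^ 2) / v) := by
  ext <;> simp only [seeley] <;> field

theorem seeley_diag_eq_zero_iff_quadratic (hv : v ≠ 0) :
    seeley σ (x, x) (v, v) = (0, 0) ↔
      v * (2 * v + σ) * (x * x) + (1 + v ^ 2) * x + -v ^ 2 = 0 := by
  rw [seeley_diag σ x hv, Prod.mk.injEq, and_self, div_eq_zero_iff, or_iff_left hv, neg_eq_zero]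

theorem discrim_seeley_diag (v σ : ℝ) :
    discrim (v * (2 * v + σ)) (1 + v ^ 2) (-v ^ 2) =
      1 + 2 * v ^ 2 + 4 * σ * v ^ 3 + 9 * v ^ 4 := by
  rw [discrim]
  ring

theorem seeley_diag_eq_zero_iff {σ : ℝ} (hv : v ≠ 0) (hvσ : 2 * v + σ ≠ 0)
    (hdiscrim : 0 ≤ 1 + 2 * v ^ 2 + 4 * σ * v ^ 3 + 9 * v ^ 4) :
    seeley σ (x, x) (v, v) = (0, 0) ↔
      x = (-(1 + v ^ 2) + √(1 + 2 * v ^ 2 + 4 * σ * v ^ 3 + 9 * v ^ 4)) /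
          (2 * v * (2 * v + σ)) ∨
        x = (-(1 + v ^ 2) - √(1 + 2 * v ^ 2 + 4 * σ * v ^ 3 + 9 * v ^ 4)) /
          (2 * v * (2 * v + σ)) := by
  have discrim_eq_sqrt_mul_self :=
    (discrim_seeley_diag v σ).trans (Real.mul_self_sqrt hdiscrim).symm
  rw [seeley_diag_eq_zero_iff_quadratic σ x hv,
    quadratic_eq_zero_iff (mul_ne_zero hv hvσ) discrim_eq_sqrt_mul_self, mul_assoc 2 v]

end Diagonal

theorem tree_symmetric_equilibrium_general (v σ : ℝ) (hv : v ≠ 0) (hvσ : 2 * v + σ ≠ 0)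
    (hdiscrim : 0 ≤ 1 + 2 * v ^ 2 + 4 * σ * v ^ 3 + 9 * v ^ 4) (mbar : ℝ)
    (hm : mbar = (-(1 + v ^ 2) + √(1 + 2 * v ^ 2 + 4 * σ * v ^ 3 + 9 * v ^ 4)) /
      (2 * v * (2 * v + σ))) :
    (∀ t : BT, uval v t = v) ∧
    (∀ l r : BT, seeley σ (mbar, mbar) (uval v l, uval v r) = (0, 0)) := by
  refine ⟨uval_eq_leaf_value v, fun l r => ?_⟩
  rw [uval_eq_leaf_value v l, uval_eq_leaf_value v r]
  exact (seeley_diag_eq_zero_iff mbar hv hvσ hdiscrim).mpr (.inl hm)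

/-- assign value `v > 0` to every leaf of a full binary tree and let
`σ > 0`.  Then (i) `u(n) = v` for every node `n`; (ii) with
`mbar = (−(1+v²) + √(1 + 2v² + 4σv³ + 9v⁴)) / (2v(2v+σ))`, the Seeley vector field
vanishes at every internal node when each node carries state `(mbar, mbar)` and value
pair `(u(left child), u(right child))`.  Hence the constant state `mbar·𝟙` is an
equilibrium of the stacked tree dynamics. -/
theorem tree_symmetric_equilibrium (v σ : ℝ) (hv : 0 < v) (hσ : 0 < σ) (mbar : ℝ)
    (hm : mbar = (-(1 + v ^ 2) + Real.sqrt (1 + 2 * v ^ 2 + 4 * σ * v ^ 3 + 9 * v ^ 4)) /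
      (2 * v * (2 * v + σ))) :
    (∀ t : BT, uval v t = v) ∧
    (∀ l r : BT, seeley σ (mbar, mbar) (uval v l, uval v r) = (0, 0)) :=
  tree_symmetric_equilibrium_general v σ hv.ne' (by positivity) (by positivity) mbar hm
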